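/- Let m ≥ 0, d > 0 and ⌊(d+1)/2⌋ ≥ k ≥ 0 be integers, and let U ⊂ S_[m] be a shifted order ideal of monomials of degree at most k. Then f_{i−1}(B_d(U)) = f_{i−1}(S_d(U)) for 1 ≤ i ≤ d − k. -/

import Mathlib

/-!
Since `S_d(U)` is a subcomplex of `B_d(U)`, it suffices to show that every face `S` of the ball
with at most `d - k` vertices lies in a ridge contained in exactly one facet.

Every facet `F = F_d(u)` has `d + 1` elements and is a disjoint union of `deg u` pairs of
consecutive integers lying below a terminal interval ending at `n`. Two consequences:
* if `y ≤ n` is not in `F`, then the number of elements of `F` below `y` is even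
  (`even_card_filter_lt`);
* if `y` is the second element of a pair, that number is odd (`odd_card_filter_lt`).

Suppose that `F_d(u) \ {v} ⊆ F_d(w)` with `F_d(w) ≠ F_d(u)`, so that
`F_d(w) = (F_d(u) \ {v}) ∪ {x}`, and that `v < x`. Then `v` is not in the terminal interval of
`F_d(u)` (otherwise `x` would be too), and it is not the second element of a pair since the two
facets have the same elements below `v`, an even number of them because `v ∉ F_d(w)`. Hence `v` is
the first element of one of the `deg u ≤ k` pairs (`eq_first_of_exchange`).

Among the facets containing `S`, take `F_d(u)` with the least sum of elements. As
`|F_d(u) \ S| ≥ k + 1`, some `v ∈ F_d(u) \ S` is not the first element of a pair. Any other facet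
containing `F_d(u) \ {v}` would contain `S` and have a smaller element sum, so `F_d(u) \ {v}` is
a boundary ridge containing `S`.
-/



open scoped Classical
noncomputable section
namespace SqueezedSpheres

/-! ### Monomials of `K[x₁,x₂,…]` as finitely supported exponent vectors (index 0 unused). -/

/-- A monomial of the polynomial ring `S_[∞] = K[x₁,x₂,…]`, recorded by its exponent vector. -/
abbrev Mon : Type := ℕ →₀ ℕ

/-- The total degree of a monomial. -/
def degMon (u : Mon) : ℕ := u.sum fun _ e => e

/-- `m(u) = max{i : xᵢ divides u}` (with value `0` for `u = 1`). -/
def mVar (u : Mon) : ℕ := u.support.sup id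

/-- The weakly increasing list `i₁ ≤ i₂ ≤ ⋯ ≤ i_d` of indices with `u = x_{i₁}⋯x_{i_d}`. -/
def sortedIdx (u : Mon) : List ℕ := (Finsupp.toMultiset u).sort (· ≤ ·)

/-- `u ≼ v`: both have the same degree and, writing `u = x_{i₁}⋯x_{i_d}`,
`v = x_{j₁}⋯x_{j_d}` with weakly increasing indices, `i_k ≤ j_k` for all `k`. -/
def prec (u v : Mon) : Prop := List.Forall₂ (· ≤ ·) (sortedIdx u) (sortedIdx v)

/-- The squarefree monomial `x_S = ∏_{i ∈ S} x_i`. -/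
def sqf (S : Finset ℕ) : Mon := Multiset.toFinsupp (S.val)

/-- `u` is a squarefree monomial. -/
def sqfreeMon (u : Mon) : Prop := ∀ j, u j ≤ 1

/-- The lexicographic order: `u <_lex v` iff the leftmost index where the exponent
vectors differ has a larger exponent in `v`. -/
def lexLT (u v : Mon) : Prop := ∃ r, u r < v r ∧ ∀ t, t < r → u t = v t

/-- The degree reverse lexicographic order induced by `x₁ > x₂ > ⋯`:
`u <_drl v` iff `deg u < deg v`, or the degrees agree and at the largest index
where the exponent vectors differ `u` has the larger exponent. -/
def degrevlexLT (u v : Mon) : Prop :=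
  degMon u < degMon v ∨ (degMon u = degMon v ∧ ∃ r, v r < u r ∧ ∀ t, r < t → u t = v t)

/-- The map `α^a` for a sequence `a : ℕ → ℕ` (with `a 0 = 0` in applications):
`α^a(x_{i₁}x_{i₂}⋯x_{i_k}) = x_{i₁} x_{i₂+a₁} x_{i₃+a₂} ⋯ x_{i_k+a_{k-1}}`
for `i₁ ≤ i₂ ≤ ⋯ ≤ i_k`. -/
def alphaMap (a : ℕ → ℕ) (u : Mon) : Mon :=
  Multiset.toFinsupp (↑((sortedIdx u).mapIdx fun j i => i + a j))

variable (K : Type) [Field K]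

/-! ### Monomial ideals of `S_[∞]`. -/

/-- The monomial `x^u` as a polynomial. -/
def mono (u : Mon) : MvPolynomial ℕ K := MvPolynomial.monomial u 1

/-- The monomial `x^u` belongs to the ideal `I`. -/
def memMon (I : Ideal (MvPolynomial ℕ K)) (u : Mon) : Prop := mono K u ∈ I

/-- The (finitely generated) monomial ideal generated by a finite set of monomials. -/
def monSpan (G : Finset Mon) : Ideal (MvPolynomial ℕ K) :=
  Ideal.span ((fun u => mono K u) '' (↑G : Set Mon))

/-- `G(I)`: the minimal monomial generators of a monomial ideal `I`. -/
def GSet (I : Ideal (MvPolynomial ℕ K)) : Set Mon :=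
  {u | memMon K I u ∧ ∀ i ∈ u.support, ¬ memMon K I (u - Finsupp.single i 1)}

/-- `max(I) = max{m(u) : u ∈ G(I)}`. -/
def maxIdx (I : Ideal (MvPolynomial ℕ K)) : ℕ := sSup (mVar '' GSet K I)

/-- For `σ : M_[∞] → M_[∞]`, the ideal `σ(I)` generated by `{σ(u) : u ∈ G(I)}`. -/
def sigmaIdeal (σ : Mon → Mon) (I : Ideal (MvPolynomial ℕ K)) : Ideal (MvPolynomial ℕ K) :=
  Ideal.span ((fun u => mono K (σ u)) '' GSet K I)

/-- `I` is a finitely generated strongly stable (monomial) ideal of `S_[∞]`: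
it is generated by finitely many monomials and is closed under the moves
`v ∈ I`, `u ≼ v` ⟹ `u ∈ I`. -/
def IsFGStronglyStable (I : Ideal (MvPolynomial ℕ K)) : Prop :=
  (∃ G : Finset Mon, I = monSpan K G) ∧
    ∀ u v : Mon, memMon K I v → prec u v → memMon K I u

/-- `I` is a finitely generated squarefree strongly stable ideal of `S_[∞]`. -/
def IsFGSqfStronglyStable (I : Ideal (MvPolynomial ℕ K)) : Prop :=
  (∃ G : Finset Mon, (∀ u ∈ G, sqfreeMon u) ∧ I = monSpan K G) ∧
    ∀ u v : Mon, sqfreeMon u → sqfreeMon v → memMon K I v → prec u v → memMon K I u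

/-! ### Simplicial homology over `K` of a finite simplicial complex,
used to define graded Betti numbers of monomial ideals (via upper Koszul
simplicial complexes, i.e. Hochster-type formulas) and the Cohen-Macaulay and
Gorenstein* properties (via Reisner-type criteria). -/

/-- Boundary map coefficient: the coefficient of the face `T` in `∂S`. -/
def bCoeff (S T : Finset ℕ) : K :=
  if T ⊆ S ∧ S.card = T.card + 1 then
    (-1 : K) ^ (S.filter fun y => y < (S \ T).sum id).card
  else 0

/-- The simplicial boundary map from `i+1`-element faces to `i`-element faces. -/
def bdry (Δ : Finset (Finset ℕ)) (i : ℕ) :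
    ((↥(Δ.filter fun S => S.card = i + 1) → K)) →ₗ[K]
      (↥(Δ.filter fun S => S.card = i) → K) :=
  Matrix.mulVecLin
    (Matrix.of fun (T : ↥(Δ.filter fun S => S.card = i))
        (S : ↥(Δ.filter fun S => S.card = i + 1)) =>
      bCoeff K (↑S : Finset ℕ) (↑T : Finset ℕ))

/-- `redH K Δ i` is the dimension over `K` of the reduced simplicial homology
`H̃_{i-1}(Δ; K)`, computed at chain position `i` (faces of cardinality `i`);
in particular `redH K Δ 0 = dim H̃_{-1}`. -/
def redH (Δ : Finset (Finset ℕ)) : ℕ → ℕ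
  | 0 => Module.finrank K (↥(Δ.filter fun S => S.card = 0) → K) -
      Module.finrank K ↥(LinearMap.range (bdry K Δ 0))
  | (i + 1) => Module.finrank K ↥(LinearMap.ker (bdry K Δ i)) -
      Module.finrank K ↥(LinearMap.range (bdry K Δ (i + 1)))

/-- Membership of `x^b` in the monomial ideal generated by `G`. -/
def memGen (G : Finset Mon) (b : Mon) : Prop := ∃ g ∈ G, g ≤ b

/-- The upper Koszul simplicial complex `K^a(I)` of the monomial ideal generated
by `G` in multidegree `a`. -/
def koszulCx (G : Finset Mon) (a : Mon) : Finset (Finset ℕ) :=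
  a.support.powerset.filter fun S => memGen G (a - sqf S)

/-- The graded Betti number `β_{i,j}` of the monomial ideal generated by `G`,
via Hochster's formula `β_{i,a}(I) = dim_K H̃_{i-1}(K^a(I); K)` summed over all
multidegrees `a` of total degree `j`. -/
def bettiGens (G : Finset Mon) (i j : ℕ) : ℕ :=
  ∑ a ∈ (Finset.Iic (G.sum id)).filter fun a => degMon a = j,
    redH K (koszulCx G a) i

/-- The graded Betti numbers `β_{ij}(I) = dim_K Tor_i(I, K)_j` of a finitely
generated monomial ideal `I` (of value `0` on ideals that are not finitely
generated monomial ideals). -/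
def betti (I : Ideal (MvPolynomial ℕ K)) (i j : ℕ) : ℕ :=
  if h : ∃ G : Finset Mon, I = monSpan K G then bettiGens K h.choose i j else 0

/-- The graded Betti numbers `β_{ij}(R/I)` of the quotient by a finitely
generated monomial ideal. -/
def bettiQ (I : Ideal (MvPolynomial ℕ K)) (i j : ℕ) : ℕ :=
  if i = 0 then (if j = 0 then 1 else 0) else betti K I (i - 1) j

/-- `β_{ij}(R/I)` allowing integer indices (`0` for negative indices). -/
def bettiQZ (I : Ideal (MvPolynomial ℕ K)) (i j : ℤ) : ℕ :=
  if 0 ≤ i ∧ 0 ≤ j then bettiQ K I i.toNat j.toNat else 0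

/-! ### Stable operators. -/

/-- A map `σ : M_[∞] → M_[∞]` is a stable operator if (i) it preserves all graded
Betti numbers of finitely generated strongly stable ideals and (ii) it preserves
inclusions of finitely generated strongly stable ideals. -/
structure IsStableOperator (σ : Mon → Mon) : Prop where
  betti_eq : ∀ I : Ideal (MvPolynomial ℕ K), IsFGStronglyStable K I →
    ∀ i j, betti K I i j = betti K (sigmaIdeal K σ I) i j
  incl : ∀ J I : Ideal (MvPolynomial ℕ K), IsFGStronglyStable K J →
    IsFGStronglyStable K I → J ≤ I → sigmaIdeal K σ J ≤ sigmaIdeal K σ I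

/-- A map `σ : M_[∞] → M_[∞]` is a squarefree stable operator if (i) it sends
finitely generated squarefree strongly stable ideals to squarefree monomial
ideals with the same graded Betti numbers and (ii) it preserves inclusions of
finitely generated squarefree strongly stable ideals. -/
structure IsSqfStableOperator (σ : Mon → Mon) : Prop where
  sqfree : ∀ I : Ideal (MvPolynomial ℕ K), IsFGSqfStronglyStable K I →
    ∀ u ∈ GSet K I, sqfreeMon (σ u)
  betti_eq : ∀ I : Ideal (MvPolynomial ℕ K), IsFGSqfStronglyStable K I →
    ∀ i j, betti K I i j = betti K (sigmaIdeal K σ I) i j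
  incl : ∀ J I : Ideal (MvPolynomial ℕ K), IsFGSqfStronglyStable K J →
    IsFGSqfStronglyStable K I → J ≤ I → sigmaIdeal K σ J ≤ sigmaIdeal K σ I

/-! ### Generic initial ideals with respect to the degree reverse
lexicographic order. -/

/-- `u` is the initial (leading) monomial of the polynomial `f` w.r.t. degrevlex. -/
def IsLeadMon (f : MvPolynomial ℕ K) (u : Mon) : Prop :=
  u ∈ f.support ∧ ∀ v ∈ f.support, v ≠ u → degrevlexLT v u

/-- The initial ideal of `I` w.r.t. the degree reverse lexicographic order. -/
def inIdeal (I : Ideal (MvPolynomial ℕ K)) : Ideal (MvPolynomial ℕ K) :=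
  Ideal.span {p | ∃ f ∈ I, ∃ u, IsLeadMon K f u ∧ p = mono K u}

/-- The action of a matrix `φ ∈ GL_n(K)` on polynomials,
`x_j ↦ ∑_i φ_{ij} x_i` for `1 ≤ j ≤ n`. -/
def gAct (n : ℕ) (φ : Matrix (Fin n) (Fin n) K) :
    MvPolynomial ℕ K →ₐ[K] MvPolynomial ℕ K :=
  MvPolynomial.aeval fun j =>
    if h : 1 ≤ j ∧ j ≤ n then
      ∑ i : Fin n, MvPolynomial.C (φ i ⟨j - 1, by omega⟩) * MvPolynomial.X ((i : ℕ) + 1)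
    else MvPolynomial.X j

/-- Evaluation of a polynomial in the `n × n` matrix entries at a matrix. -/
def evalMat (n : ℕ) (φ : Matrix (Fin n) (Fin n) K)
    (P : MvPolynomial (Fin n × Fin n) K) : K :=
  MvPolynomial.eval (fun p => φ p.1 p.2) P

/-- `J` is the generic initial ideal of `I` (w.r.t. degrevlex and the action of
`GL_n(K)` on `x₁,…,x_n`): there is a nonempty Zariski open subset of `GL_n(K)`
on which `in(φ(I))` is constantly equal to `J`. -/
def GinSpec (n : ℕ) (I J : Ideal (MvPolynomial ℕ K)) : Prop :=
  ∃ P : MvPolynomial (Fin n × Fin n) K, P ≠ 0 ∧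
    (∃ φ : Matrix (Fin n) (Fin n) K, IsUnit φ.det ∧ evalMat K n φ P ≠ 0) ∧
    ∀ φ : Matrix (Fin n) (Fin n) K, IsUnit φ.det → evalMat K n φ P ≠ 0 →
      inIdeal K (Ideal.map (gAct K n φ) I) = J

/-- The generic initial ideal `gin(I)` w.r.t. the degree reverse lexicographic
order (and coordinate changes of `x₁,…,x_n`). -/
def gin (n : ℕ) (I : Ideal (MvPolynomial ℕ K)) : Ideal (MvPolynomial ℕ K) :=
  if h : ∃ J, GinSpec K n I J then h.choose else ⊥

/-- `gin(I)` for a finitely generated ideal of `S_[∞]`, computed in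
`S_[max(I)]` as in the convention `gin(I) = gin(I ∩ S_[max(I)]) S_[∞]`. -/
def ginInf (I : Ideal (MvPolynomial ℕ K)) : Ideal (MvPolynomial ℕ K) :=
  gin K (maxIdx K I) I

/-! ### Simplicial complexes on `[n]`, Stanley-Reisner ideals, `f`-, `h`- and
`g`-vectors, Cohen-Macaulay and Gorenstein* complexes. -/

/-- `Γ` is a simplicial complex on the vertex set `[n] = {1,…,n}`. -/
def IsComplexOn (n : ℕ) (Γ : Finset (Finset ℕ)) : Prop :=
  (∀ S ∈ Γ, S ⊆ Finset.Icc 1 n) ∧ (∀ S ∈ Γ, ∀ T ⊆ S, T ∈ Γ) ∧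
    (∀ i ∈ Finset.Icc 1 n, ({i} : Finset ℕ) ∈ Γ)

/-- `Γ` is `(d-1)`-dimensional (all faces have at most `d` vertices, some face
has exactly `d` vertices). -/
def IsDimensional (Γ : Finset (Finset ℕ)) (d : ℕ) : Prop :=
  (∀ S ∈ Γ, S.card ≤ d) ∧ ∃ S ∈ Γ, S.card = d

/-- The Stanley-Reisner ideal `I_Γ ⊂ S_[n]` of a simplicial complex on `[n]`. -/
def SRideal (n : ℕ) (Γ : Finset (Finset ℕ)) : Ideal (MvPolynomial ℕ K) :=
  Ideal.span {p | ∃ S : Finset ℕ, S ⊆ Finset.Icc 1 n ∧ S ∉ Γ ∧ p = mono K (sqf S)}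

/-- `fvec Γ i = f_{i-1}(Γ)`, the number of faces of `Γ` with `i` vertices. -/
def fvec (Γ : Finset (Finset ℕ)) (i : ℕ) : ℕ := (Γ.filter fun S => S.card = i).card

/-- The `h`-vector of a `(d-1)`-dimensional complex:
`h_i = ∑_{j=0}^{i} (-1)^{i-j} C(d-j, d-i) f_{j-1}`. -/
def hvec (Γ : Finset (Finset ℕ)) (d i : ℕ) : ℤ :=
  ∑ j ∈ Finset.range (i + 1),
    (-1 : ℤ) ^ (i - j) * (Nat.choose (d - j) (d - i) : ℤ) * (fvec Γ j : ℤ)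

/-- The `g`-vector: `g₀ = 1` and `g_i = h_i - h_{i-1}`. -/
def gvec (Γ : Finset (Finset ℕ)) (d i : ℕ) : ℤ :=
  if i = 0 then 1 else hvec Γ d i - hvec Γ d (i - 1)

/-- The link of a face `S` in `Γ`. -/
def linkOf (Γ : Finset (Finset ℕ)) (S : Finset ℕ) : Finset (Finset ℕ) :=
  Γ.filter fun T => Disjoint S T ∧ S ∪ T ∈ Γ

/-- `Γ` is Cohen-Macaulay over `K` (Reisner's criterion: for every face `S` and
every `i` below the dimension of the link of `S`, `H̃_{i-1}(link S; K) = 0`). -/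
def IsCM (Γ : Finset (Finset ℕ)) : Prop :=
  ∀ S ∈ Γ, ∀ i < (linkOf Γ S).sup Finset.card, redH K (linkOf Γ S) i = 0

/-- `Γ` is a `(d-1)`-dimensional Gorenstein* complex over `K` (the standard
characterization: every link has the reduced homology of a sphere of the
appropriate dimension). -/
def IsGorensteinStar (d : ℕ) (Γ : Finset (Finset ℕ)) : Prop :=
  IsDimensional Γ d ∧
    ∀ S ∈ Γ, ∀ i, redH K (linkOf Γ S) i = if i = d - S.card then 1 else 0

/-! ### The monomial sets `L(Γ)` and `U(Γ)`. -/

/-- `L_i(Γ)`: degree-`i` monomials of `S_[n-d]` not belonging to `gin(I_Γ)`. -/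
def Lset (n d : ℕ) (Γ : Finset (Finset ℕ)) (i : ℕ) : Set Mon :=
  {u | (∀ j ∈ u.support, 1 ≤ j ∧ j ≤ n - d) ∧ degMon u = i ∧
    ¬ memMon K (gin K n (SRideal K n Γ)) u}

/-- `L(Γ)`: monomials of `S_[n-d]` not belonging to `gin(I_Γ)`. -/
def LsetAll (n d : ℕ) (Γ : Finset (Finset ℕ)) : Set Mon :=
  {u | (∀ j ∈ u.support, 1 ≤ j ∧ j ≤ n - d) ∧ ¬ memMon K (gin K n (SRideal K n Γ)) u}

/-- `U(Γ)`: monomials of `S_[n-d-1]` not belonging to `gin(I_Γ)`. -/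
def Uset (n d : ℕ) (Γ : Finset (Finset ℕ)) : Set Mon :=
  {u | (∀ j ∈ u.support, 1 ≤ j ∧ j ≤ n - d - 1) ∧
    ¬ memMon K (gin K n (SRideal K n Γ)) u}

/-- `U_i(Γ)`: degree-`i` monomials of `S_[n-d-1]` not belonging to `gin(I_Γ)`. -/
def UsetDeg (n d : ℕ) (Γ : Finset (Finset ℕ)) (i : ℕ) : Set Mon :=
  {u ∈ Uset K n d Γ | degMon u = i}

/-! ### Lefschetz properties. -/

/-- The ideal generated by the variables outside `{x₁,…,x_n}`. -/
def outsideIdeal (n : ℕ) : Ideal (MvPolynomial ℕ K) :=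
  Ideal.span {p | ∃ j : ℕ, (j = 0 ∨ n < j) ∧ p = MvPolynomial.X j}

/-- A linear form in the variables `x₁,…,x_n`. -/
def IsLinForm (n : ℕ) (f : MvPolynomial ℕ K) : Prop :=
  f ∈ MvPolynomial.homogeneousSubmodule ℕ K 1 ∧ f.vars ⊆ Finset.Icc 1 n

/-- The `i`-th homogeneous component of the quotient by `J`, as a `K`-submodule. -/
def grPiece (J : Ideal (MvPolynomial ℕ K)) (i : ℕ) :
    Submodule K (MvPolynomial ℕ K ⧸ J) :=
  Submodule.map (Ideal.Quotient.mkₐ K J).toLinearMap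
    (MvPolynomial.homogeneousSubmodule ℕ K i)

/-- The ideal `I_Γ + (θ₁,…,θ_d)` inside `S_[n]`, realized in `S_[∞]` by also
killing the variables outside `{x₁,…,x_n}`. -/
def fullIdeal (n d : ℕ) (Γ : Finset (Finset ℕ)) (θ : Fin d → MvPolynomial ℕ K) :
    Ideal (MvPolynomial ℕ K) :=
  SRideal K n Γ ⊔ Ideal.span (Set.range θ) ⊔ outsideIdeal K n

/-- `θ₁,…,θ_d` is a system of parameters of `S_[n]/I_Γ` consisting of linear
forms (for a `(d-1)`-dimensional complex: the quotient by them is Artinian,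
i.e. a finite dimensional `K`-vector space). -/
def IsLinearSOP (n d : ℕ) (Γ : Finset (Finset ℕ)) (θ : Fin d → MvPolynomial ℕ K) : Prop :=
  (∀ k, IsLinForm K n (θ k)) ∧ Module.Finite K (MvPolynomial ℕ K ⧸ fullIdeal K n d Γ θ)

/-- Multiplication by (the class of) `f` is injective from the `i`-th to the
`i'`-th homogeneous component of the quotient by `J`. -/
def mulInjOn (J : Ideal (MvPolynomial ℕ K)) (f : MvPolynomial ℕ K) (i i' : ℕ) : Prop :=
  ∀ a b : MvPolynomial ℕ K ⧸ J, a ∈ grPiece K J i → b ∈ grPiece K J i →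
    Ideal.Quotient.mk J f * a = Ideal.Quotient.mk J f * b → a = b

/-- Multiplication by (the class of) `f` maps the `i`-th homogeneous component
of the quotient by `J` onto the `i'`-th one. -/
def mulSurjOnto (J : Ideal (MvPolynomial ℕ K)) (f : MvPolynomial ℕ K) (i i' : ℕ) : Prop :=
  ∀ c ∈ grPiece K J i', ∃ a ∈ grPiece K J i, Ideal.Quotient.mk J f * a = c

/-- The weak Lefschetz property of a `(d-1)`-dimensional (Gorenstein*)
complex `Γ` on `[n]`. -/
def HasWLP (n d : ℕ) (Γ : Finset (Finset ℕ)) : Prop :=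
  ∃ (θ : Fin d → MvPolynomial ℕ K) (ω : MvPolynomial ℕ K),
    IsLinearSOP K n d Γ θ ∧ IsLinForm K n ω ∧
    (∀ i, 1 ≤ i → i ≤ d / 2 → mulInjOn K (fullIdeal K n d Γ θ) ω (i - 1) i) ∧
    (∀ i, d / 2 < i → mulSurjOnto K (fullIdeal K n d Γ θ) ω (i - 1) i)

/-- The strong Lefschetz property of a `(d-1)`-dimensional (Gorenstein*)
complex `Γ` on `[n]`. -/
def HasSLP (n d : ℕ) (Γ : Finset (Finset ℕ)) : Prop :=
  ∃ (θ : Fin d → MvPolynomial ℕ K) (ω : MvPolynomial ℕ K),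
    IsLinearSOP K n d Γ θ ∧ IsLinForm K n ω ∧
    ∀ i ≤ d / 2,
      mulInjOn K (fullIdeal K n d Γ θ) (ω ^ (d - 2 * i)) i (d - i) ∧
      mulSurjOnto K (fullIdeal K n d Γ θ) (ω ^ (d - 2 * i)) i (d - i)

/-! ### Shifted order ideals of monomials, squeezed balls and squeezed spheres. -/

/-- `U` is a shifted order ideal of monomials of `S_[m]`:
it contains `1, x₁,…,x_m`, consists of monomials in `x₁,…,x_m`, is closed
under taking divisors, and is closed under `u ∈ U`, `u ≼ v` ⟹ `v ∈ U`. -/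
def IsShiftedOrderIdeal (m : ℕ) (U : Finset Mon) : Prop :=
  ((0 : Mon) ∈ U) ∧ (∀ i, 1 ≤ i → i ≤ m → (Finsupp.single i 1 : Mon) ∈ U) ∧
  (∀ u ∈ U, ∀ j ∈ (u : Mon).support, 1 ≤ j ∧ j ≤ m) ∧
  (∀ u ∈ U, ∀ v : Mon, v ≤ u → v ∈ U) ∧
  (∀ u ∈ U, ∀ v : Mon, prec u v → (∀ j ∈ v.support, 1 ≤ j ∧ j ≤ m) → v ∈ U)

/-- `I(U) ⊂ S_[∞]`: the ideal generated by all monomials of `S_[m]` not in `U`. -/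
def IU (m : ℕ) (U : Finset Mon) : Ideal (MvPolynomial ℕ K) :=
  Ideal.span {p | ∃ u : Mon, (∀ j ∈ u.support, 1 ≤ j ∧ j ≤ m) ∧ u ∉ U ∧ p = mono K u}

/-- The facet `F_d(u) ⊂ [n]` associated with a monomial `u = x_{i₁}⋯x_{i_k}`,
`i₁ ≤ ⋯ ≤ i_k`:
`F_d(u) = {i₁, i₁+1} ∪ {i₂+2, i₂+3} ∪ ⋯ ∪ {i_k+2(k-1), i_k+2k-1} ∪ {n+2k-d,…,n}`. -/
def Fface (n d : ℕ) (u : Mon) : Finset ℕ :=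
  ((Finset.range (degMon u)).biUnion fun j =>
      {(sortedIdx u).getD j 0 + 2 * j, (sortedIdx u).getD j 0 + 2 * j + 1}) ∪
    Finset.Icc (n + 2 * degMon u - d) n

/-- The squeezed `d`-ball `B_d(U)`: the simplicial complex on `[n]` generated by
`{F_d(u) : u ∈ U}`. -/
def squeezedBall (n d : ℕ) (U : Finset Mon) : Finset (Finset ℕ) :=
  U.biUnion fun u => (Fface n d u).powerset

/-- The squeezed `(d-1)`-sphere `S_d(U) = ∂B_d(U)`: the subcomplex of `B_d(U)`
generated by the `d`-element faces lying in exactly one facet. -/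
def squeezedSphere (n d : ℕ) (U : Finset Mon) : Finset (Finset ℕ) :=
  ((squeezedBall n d U).filter fun G => G.card = d ∧
      ((U.image fun u => Fface n d u).filter fun F => G ⊆ F).card = 1).biUnion
    Finset.powerset

end SqueezedSpheres

/-! ### Linear quotients auxiliary data. -/

namespace SqueezedSpheres
open scoped Classical
noncomputable section

/-- For `u = x_{i₁}⋯x_{i_d}` with `i₁ ≤ ⋯ ≤ i_d`: `iIdx u l = i_l`, with the
convention `i₀ = 1`. -/
def iIdx (u : Mon) (l : ℕ) : ℕ := if l = 0 then 1 else (sortedIdx u).getD (l - 1) 0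

/-- The set `⋃_{l=0}^{d-1} {k : i_l + a_l ≤ k < i_{l+1} + a_l}` (where `i₀ = 1`
and `a₀ = 0`). -/
def ASet (a : ℕ → ℕ) (u : Mon) : Set ℕ :=
  {k | ∃ l < degMon u, iIdx u l + a l ≤ k ∧ k < iIdx u (l + 1) + a l}

/-! ### Polytopal spheres. -/

/-- `S` is the vertex set of a proper (exposed) face of the polytope with
vertices `v i`, `i ∈ [n]`. -/
def IsProperFaceSet (n d : ℕ) (v : ℕ → (Fin d → ℝ)) (S : Finset ℕ) : Prop :=
  ∃ (ℓ : (Fin d → ℝ) →ₗ[ℝ] ℝ) (c : ℝ),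
    (∀ i ∈ Finset.Icc 1 n, ℓ (v i) ≤ c) ∧
    (∀ i ∈ Finset.Icc 1 n, (ℓ (v i) = c ↔ i ∈ S)) ∧
    (∃ i ∈ Finset.Icc 1 n, ℓ (v i) < c)

/-- `Γ` is (isomorphic to) the boundary complex of a simplicial `d`-polytope
with `n` vertices: there is an injective placement `v` of the vertices `[n]` in
`ℝ^d` spanning affinely, each `v i` a vertex (extreme point) of the convex hull,
every proper face a simplex, such that the nonempty faces of `Γ` are exactly
the vertex sets of proper faces of the polytope. -/
def IsPolytopalSphere (n d : ℕ) (Γ : Finset (Finset ℕ)) : Prop :=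
  ∃ v : ℕ → (Fin d → ℝ),
    Set.InjOn v ↑(Finset.Icc 1 n) ∧
    affineSpan ℝ (v '' ↑(Finset.Icc 1 n)) = ⊤ ∧
    (∀ i ∈ Finset.Icc 1 n, v i ∉ convexHull ℝ (v '' ↑((Finset.Icc 1 n).erase i))) ∧
    (∀ S : Finset ℕ, S ⊆ Finset.Icc 1 n → IsProperFaceSet n d v S →
      AffineIndependent ℝ fun i : ↥S => v ↑i) ∧
    (∀ S : Finset ℕ, S.Nonempty →
      (S ∈ Γ ↔ S ⊆ Finset.Icc 1 n ∧ IsProperFaceSet n d v S)) ∧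
    (∅ : Finset ℕ) ∈ Γ

/-! ### Exterior algebraic shifting.

For a generic matrix `g ∈ GL_n(K)` the image of the exterior monomial `e_S` in
the exterior face ring `E/J_Γ` has, in the basis `{e_T : T ∈ Γ}`, coordinates
`± det g[T,S]`; `S` is a face of the exterior algebraic shifted complex
`Δ^e(Γ)` (defined by `J_{Δ^e(Γ)} = Gin(J_Γ)` w.r.t. degrevlex) if and only if
this image does not lie in the span of the images of the `e_T` with
`T <_drl S`. -/

variable (K : Type) [Field K]

/-- Matrix entry `g_{st}` for `1`-based indices `s, t ∈ [n]`. -/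
def gEnt (n : ℕ) (g : Matrix (Fin n) (Fin n) K) (s t : ℕ) : K :=
  if hs : s - 1 < n then if ht : t - 1 < n then g ⟨s - 1, hs⟩ ⟨t - 1, ht⟩ else 0 else 0

/-- The minor `det g[T, S]` of rows `T` and columns `S` (two subsets of `[n]` of
equal cardinality, taken in increasing order). -/
def subDet (n : ℕ) (g : Matrix (Fin n) (Fin n) K) (T S : Finset ℕ) : K :=
  if h : T.card = S.card then
    Matrix.det (Matrix.of fun a b : Fin S.card =>
      gEnt K n g (T.orderEmbOfFin h a) (S.orderEmbOfFin rfl b))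
  else 0

/-- The coordinate vector (in the basis of faces of `Γ`) of the image of the
generic exterior monomial `e_S` in the exterior face ring of `Γ`. -/
def lamVec (n : ℕ) (Γ : Finset (Finset ℕ)) (g : Matrix (Fin n) (Fin n) K)
    (S : Finset ℕ) : Finset ℕ → K :=
  fun T => if T ∈ Γ ∧ T.card = S.card then subDet K n g T S else 0

/-- Degrevlex on squarefree monomials: `S <_drl T` (for `|S| = |T|`) iff the
largest element of the symmetric difference belongs to `S`. -/
def drlSetLT (S T : Finset ℕ) : Prop :=
  ∃ r ∈ S, r ∉ T ∧ ∀ t, r < t → (t ∈ S ↔ t ∈ T)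

/-- `Δ` is the exterior algebraic shifted complex `Δ^e(Γ)` (i.e.
`J_Δ = Gin(J_Γ)`, the generic initial ideal of the exterior face ideal of `Γ`
w.r.t. degrevlex): for every matrix `g` in a nonempty Zariski open subset of
`GL_n(K)`, a subset `S ⊆ [n]` is a face of `Δ` iff the image of the generic
exterior monomial `e_S` in the exterior face ring of `Γ` does not lie in the
span of the images of the `e_T` with `T <_drl S`. -/
def DeltaESpec (n : ℕ) (Γ Δ : Finset (Finset ℕ)) : Prop :=
  ∃ P : MvPolynomial (Fin n × Fin n) K, P ≠ 0 ∧
    (∃ g : Matrix (Fin n) (Fin n) K, IsUnit g.det ∧ evalMat K n g P ≠ 0) ∧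
    ∀ g : Matrix (Fin n) (Fin n) K, IsUnit g.det → evalMat K n g P ≠ 0 →
      ∀ S : Finset ℕ, S ∈ Δ ↔ S ⊆ Finset.Icc 1 n ∧
        lamVec K n Γ g S ∉ Submodule.span K
          {w | ∃ T : Finset ℕ, T ⊆ Finset.Icc 1 n ∧ T.card = S.card ∧
            drlSetLT T S ∧ w = lamVec K n Γ g T}

/-- The exterior algebraic shifted complex `Δ^e(Γ)` of a complex on `[n]`. -/
def deltaE (n : ℕ) (Γ : Finset (Finset ℕ)) : Finset (Finset ℕ) :=
  if h : ∃ Δ, DeltaESpec K n Γ Δ then h.choose else ∅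

/-- The complex `σ(Γ)` on `[n]` defined by `I_{σ(Γ)} = σ(I_Γ S_[∞]) ∩ S_[n]`. -/
def sigmaCplx (n : ℕ) (σ : Mon → Mon) (Γ : Finset (Finset ℕ)) : Finset (Finset ℕ) :=
  (Finset.Icc 1 n).powerset.filter fun S =>
    ¬ memMon K (sigmaIdeal K σ (SRideal K n Γ)) (sqf S)

/-! ### Squeezing. -/

/-- `U(Γ)` as a finite set of monomials. -/
def UFin (n d : ℕ) (Γ : Finset (Finset ℕ)) : Finset Mon :=
  if h : (Uset K n d Γ).Finite then h.toFinset else ∅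

/-- The squeezing operation `Sq(Γ) = S_d(U(Γ))`. -/
def SqCplx (n d : ℕ) (Γ : Finset (Finset ℕ)) : Finset (Finset ℕ) :=
  squeezedSphere n d (UFin K n d Γ)

/-- The face `{i₁, i₂+1, …, i_k+k-1} ∪ {n-k+1,…,n}` associated with a monomial
`u = x_{i₁}⋯x_{i_k}`, `i₁ ≤ ⋯ ≤ i_k`. -/
def Lface (n : ℕ) (u : Mon) : Finset ℕ :=
  ((Finset.range (degMon u)).image fun j => (sortedIdx u).getD j 0 + j) ∪
    Finset.Icc (n - degMon u + 1) n

end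
end SqueezedSpheres

namespace SqueezedSpheres

/-! ### Unions of separated pairs and a terminal interval -/

/-- The union of the pairs `{a j, a j + 1}`, `j < r`, and the interval `[t, n]`. -/
def pairSet (r : ℕ) (a : ℕ → ℕ) (t n : ℕ) : Finset ℕ :=
  ((Finset.range r).biUnion fun j => {a j, a j + 1}) ∪ Finset.Icc t n

/-- The pairs `{a j, a j + 1}`, `j < r`, are disjoint, in increasing order, and lie below `t`. -/
def Separated (r : ℕ) (a : ℕ → ℕ) (t : ℕ) : Prop :=
  (∀ i j, i < j → j < r → a i + 2 ≤ a j) ∧ ∀ j < r, a j + 1 < t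

theorem mem_pairSet {r : ℕ} {a : ℕ → ℕ} {t n y : ℕ} :
    y ∈ pairSet r a t n ↔ (∃ j < r, y = a j ∨ y = a j + 1) ∨ (t ≤ y ∧ y ≤ n) := by
  simp [pairSet]

theorem card_biUnion_pairs {r : ℕ} {a : ℕ → ℕ} {t : ℕ} (h : Separated r a t) {s : Finset ℕ}
    (hs : s ⊆ Finset.range r) :
    (s.biUnion fun j => ({a j, a j + 1} : Finset ℕ)).card = 2 * s.card := by
  rw [Finset.card_biUnion]
  · rw [Finset.sum_congr rfl (fun j _ => Finset.card_pair (Nat.ne_of_lt (Nat.lt_succ_self (a j))))]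
    simp [mul_comm]
  · intro i hi j hj hij
    have hi' := Finset.mem_range.1 (hs hi)
    have hj' := Finset.mem_range.1 (hs hj)
    refine Finset.disjoint_left.2 fun x hx hx' => ?_
    simp only [Finset.mem_insert, Finset.mem_singleton] at hx hx'
    rcases lt_or_gt_of_ne hij with hlt | hlt
    · have := h.1 _ _ hlt hj'
      omega
    · have := h.1 _ _ hlt hi'
      omega

theorem card_pairSet {r : ℕ} {a : ℕ → ℕ} {t n : ℕ} (h : Separated r a t) :
    (pairSet r a t n).card = 2 * r + (n + 1 - t) := by
  rw [pairSet, Finset.card_union_of_disjoint, card_biUnion_pairs h subset_rfl]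
  · simp
  · rw [Finset.disjoint_left]
    intro x hx hx'
    simp only [Finset.mem_biUnion, Finset.mem_range, Finset.mem_insert, Finset.mem_singleton,
      Finset.mem_Icc] at hx hx'
    obtain ⟨j, hj, hx⟩ := hx
    have := h.2 j hj
    omega

/-- Below a missing `y ≤ n` only complete pairs occur. -/
theorem even_card_filter_lt {r : ℕ} {a : ℕ → ℕ} {t n y : ℕ} (h : Separated r a t) (hyn : y ≤ n)
    (hy : y ∉ pairSet r a t n) : Even ((pairSet r a t n).filter (· < y)).card := by
  have key : (pairSet r a t n).filter (· < y) =
      ((Finset.range r).filter (fun j => a j < y)).biUnion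
        fun j => ({a j, a j + 1} : Finset ℕ) := by
    rw [mem_pairSet, not_or] at hy
    ext x
    simp only [Finset.mem_filter, mem_pairSet, Finset.mem_biUnion, Finset.mem_range,
      Finset.mem_insert, Finset.mem_singleton]
    constructor
    · rintro ⟨⟨j, hj, hx⟩ | hx, hxy⟩
      · exact ⟨j, ⟨hj, by omega⟩, hx⟩
      · exact absurd (⟨by omega, hyn⟩ : t ≤ y ∧ y ≤ n) hy.2
    · rintro ⟨j, ⟨hj, hjy⟩, hx⟩
      have : y ≠ a j + 1 := fun e => hy.1 ⟨j, hj, Or.inr e⟩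
      exact ⟨Or.inl ⟨j, hj, hx⟩, by omega⟩
  rw [key, card_biUnion_pairs h (Finset.filter_subset _ _)]
  exact even_two_mul _

/-- Below the second element of a pair there are complete pairs and one first element. -/
theorem odd_card_filter_lt {r : ℕ} {a : ℕ → ℕ} {t n j : ℕ} (h : Separated r a t) (hj : j < r) :
    Odd ((pairSet r a t n).filter (· < a j + 1)).card := by
  have key : (pairSet r a t n).filter (· < a j + 1) =
      insert (a j) ((Finset.range j).biUnion fun j => ({a j, a j + 1} : Finset ℕ)) := by
    ext x
    simp only [Finset.mem_filter, mem_pairSet, Finset.mem_biUnion, Finset.mem_range,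
      Finset.mem_insert, Finset.mem_singleton]
    have hjt := h.2 j hj
    constructor
    · rintro ⟨⟨i, hi, hx⟩ | hx, hxy⟩
      · rcases lt_trichotomy i j with hij | rfl | hij
        · exact Or.inr ⟨i, hij, hx⟩
        · left
          omega
        · have := h.1 _ _ hij hi
          omega
      · omega
    · rintro (rfl | ⟨i, hi, hx⟩)
      · exact ⟨Or.inl ⟨j, hj, Or.inl rfl⟩, by omega⟩
      · have := h.1 _ _ hi hj
        exact ⟨Or.inl ⟨i, by omega, hx⟩, by omega⟩
  rw [key, Finset.card_insert_of_notMem, card_biUnion_pairs h]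
  · exact odd_two_mul_add_one _
  · intro x hx
    simp only [Finset.mem_range] at hx ⊢
    omega
  · simp only [Finset.mem_biUnion, Finset.mem_range, Finset.mem_insert, Finset.mem_singleton,
      not_exists, not_and]
    intro i hi
    have := h.1 _ _ hi hj
    omega

/-- If exchanging `v` for a larger `x` turns one such set into another, then `v` is the first
element of a pair. -/
theorem eq_first_of_exchange {r r' : ℕ} {a a' : ℕ → ℕ} {t t' n v x : ℕ} (h : Separated r a t)
    (h' : Separated r' a' t') (hv : v ∈ pairSet r a t n) (hx : x ∉ pairSet r a t n) (hvx : v < x)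
    (hxn : x ≤ n) (he : pairSet r' a' t' n = insert x ((pairSet r a t n).erase v)) :
    v ∈ (Finset.range r).image a := by
  have hv' : v ∉ pairSet r' a' t' n := by
    rw [he]
    simp [hvx.ne]
  have hfil : (pairSet r' a' t' n).filter (· < v) = (pairSet r a t n).filter (· < v) := by
    ext y
    simp only [he, Finset.mem_filter, Finset.mem_insert, Finset.mem_erase]
    constructor
    · rintro ⟨rfl | ⟨_, hy⟩, hyv⟩
      · omega
      · exact ⟨hy, hyv⟩
    · rintro ⟨hy, hyv⟩
      exact ⟨Or.inr ⟨by omega, hy⟩, hyv⟩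
  have heven := even_card_filter_lt h' (hvx.le.trans hxn) hv'
  rw [hfil] at heven
  rcases mem_pairSet.1 hv with ⟨j, hj, rfl | rfl⟩ | hvt
  · exact Finset.mem_image_of_mem _ (Finset.mem_range.2 hj)
  · exact absurd heven (Nat.not_even_iff_odd.2 (odd_card_filter_lt h hj))
  · exact absurd (mem_pairSet.2 (Or.inr ⟨by omega, hxn⟩)) hx

/-! ### The facets of squeezed balls -/

/-- The first element `i_{j+1} + 2j` of the pair of `F_d(u)` with (zero-based) position `j`. -/
def pairStart (u : Mon) (j : ℕ) : ℕ := (sortedIdx u).getD j 0 + 2 * j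

theorem length_sortedIdx (u : Mon) : (sortedIdx u).length = degMon u := by
  rw [sortedIdx, Multiset.length_sort, Finsupp.card_toMultiset]
  rfl

theorem Fface_eq_pairSet (n d : ℕ) (u : Mon) :
    Fface n d u = pairSet (degMon u) (pairStart u) (n + 2 * degMon u - d) n := rfl

theorem separated_pairStart {m d : ℕ} {u : Mon} (hu : ∀ j ∈ u.support, 1 ≤ j ∧ j ≤ m) :
    Separated (degMon u) (pairStart u) (m + d + 1 + 2 * degMon u - d) := by
  have hlen := length_sortedIdx u
  refine ⟨fun i j hij hj => ?_, fun j hj => ?_⟩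
  · have hs : (sortedIdx u).Pairwise (· ≤ ·) := Multiset.pairwise_sort _ _
    have := List.pairwise_iff_getElem.1 hs i j (by omega) (by omega) hij
    simp only [pairStart]
    rw [List.getD_eq_getElem _ _ (by omega), List.getD_eq_getElem _ _ (by omega)]
    omega
  · have hmem : (sortedIdx u)[j]'(by omega) ∈ u.support := by
      rw [← Finsupp.mem_toMultiset, ← Multiset.mem_sort (· ≤ ·)]
      exact List.getElem_mem _
    have := (hu _ hmem).2
    simp only [pairStart]
    rw [List.getD_eq_getElem _ _ (by omega)]
    omega

/-- The bound `deg u ≤ (d + 1) / 2` guarantees that the terminal interval has exactly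
`d + 1 - 2 deg u ≥ 0` elements. -/
theorem card_Fface {m d : ℕ} {u : Mon} (hu : ∀ j ∈ u.support, 1 ≤ j ∧ j ≤ m)
    (hd : degMon u ≤ (d + 1) / 2) : (Fface (m + d + 1) d u).card = d + 1 := by
  rw [Fface_eq_pairSet, card_pairSet (separated_pairStart hu)]
  omega

theorem le_of_mem_Fface {m d : ℕ} {u : Mon} (hu : ∀ j ∈ u.support, 1 ≤ j ∧ j ≤ m)
    (hd : degMon u ≤ (d + 1) / 2) {x : ℕ} (hx : x ∈ Fface (m + d + 1) d u) : x ≤ m + d + 1 := by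
  rw [Fface_eq_pairSet, mem_pairSet] at hx
  rcases hx with ⟨j, hj, hx⟩ | hx
  · have := (separated_pairStart (d := d) hu).2 j hj
    omega
  · exact hx.2

/-- Another facet through `F_d(u) \ {v}`, for `v` not the first element of a pair, has a smaller
sum of elements. -/
theorem sum_Fface_lt {m d : ℕ} {u w : Mon} (hu : ∀ j ∈ u.support, 1 ≤ j ∧ j ≤ m)
    (hw : ∀ j ∈ w.support, 1 ≤ j ∧ j ≤ m) (hdu : degMon u ≤ (d + 1) / 2)
    (hdw : degMon w ≤ (d + 1) / 2) {v : ℕ} (hv : v ∈ Fface (m + d + 1) d u)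
    (hvf : v ∉ (Finset.range (degMon u)).image (pairStart u))
    (hsub : (Fface (m + d + 1) d u).erase v ⊆ Fface (m + d + 1) d w)
    (hne : Fface (m + d + 1) d w ≠ Fface (m + d + 1) d u) :
    ∑ y ∈ Fface (m + d + 1) d w, y < ∑ y ∈ Fface (m + d + 1) d u, y := by
  have cu := card_Fface hu hdu
  have cw := card_Fface hw hdw
  have hcard := Finset.card_erase_of_mem hv
  obtain ⟨x, hx, he⟩ : ∃ x, x ∉ (Fface (m + d + 1) d u).erase v ∧
      insert x ((Fface (m + d + 1) d u).erase v) = Fface (m + d + 1) d w := by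
    refine (Finset.covBy_iff_exists_insert).1 ?_
    rw [Finset.covBy_iff_card_sdiff_eq_one]
    refine ⟨hsub, ?_⟩
    rw [Finset.card_sdiff_of_subset hsub]
    omega
  have hxv : x ≠ v := by
    rintro rfl
    exact hne (by rw [← he, Finset.insert_erase hv])
  have hxu : x ∉ Fface (m + d + 1) d u := fun hmem => hx (Finset.mem_erase.2 ⟨hxv, hmem⟩)
  have hxn : x ≤ m + d + 1 :=
    le_of_mem_Fface hw hdw (by rw [← he]; exact Finset.mem_insert_self _ _)
  have hlt : x < v := by
    by_contra hcon
    exact hvf (eq_first_of_exchange (separated_pairStart hu) (separated_pairStart hw) hv hxu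
      (by omega) hxn he.symm)
  rw [← he, Finset.sum_insert hx, ← Finset.add_sum_erase _ (fun y => y) hv]
  omega

/-- **Lemma (Murai, Lemma 2.2).** Let `m ≥ 0`, `d > 0` and
`⌊(d+1)/2⌋ ≥ k ≥ 0` be integers and `U ⊂ S_[m]` a shifted order ideal of
monomials of degree at most `k`. Then `f_{i-1}(B_d(U)) = f_{i-1}(S_d(U))` for
`1 ≤ i ≤ d - k`. -/
theorem fvec_squeezedBall_eq_squeezedSphere
    (m d k : ℕ) (hd : 0 < d) (hk : k ≤ (d + 1) / 2) (U : Finset Mon)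
    (hU : IsShiftedOrderIdeal m U) (hdeg : ∀ u ∈ U, degMon u ≤ k) :
    ∀ i, 1 ≤ i → i ≤ d - k →
      fvec (squeezedBall (m + d + 1) d U) i = fvec (squeezedSphere (m + d + 1) d U) i := by
  intro i _ hik
  have hvar := hU.2.2.1
  have hdeg' : ∀ u ∈ U, degMon u ≤ (d + 1) / 2 := fun u hu => (hdeg u hu).trans hk
  unfold fvec
  congr 1
  ext S
  simp only [Finset.mem_filter, and_congr_left_iff]
  intro hS
  constructor
  · intro hSB
    obtain ⟨u₀, hu₀, hSu₀⟩ := Finset.mem_biUnion.1 hSB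
    -- the facet containing `S` with the least sum of elements
    obtain ⟨u, hu, hmin⟩ := Finset.exists_min_image
      (U.filter fun u => S ⊆ Fface (m + d + 1) d u)
      (fun u => ∑ y ∈ Fface (m + d + 1) d u, y)
      ⟨u₀, Finset.mem_filter.2 ⟨hu₀, Finset.mem_powerset.1 hSu₀⟩⟩
    obtain ⟨huU, hSu⟩ := Finset.mem_filter.1 hu
    have cu := card_Fface (hvar u huU) (hdeg' u huU)
    obtain ⟨v, hv, hvf⟩ : ∃ v ∈ Fface (m + d + 1) d u \ S,
        v ∉ (Finset.range (degMon u)).image (pairStart u) := by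
      refine Finset.exists_mem_notMem_of_card_lt_card ?_
      have h1 := Finset.card_image_le (s := Finset.range (degMon u)) (f := pairStart u)
      rw [Finset.card_range] at h1
      have h2 := hdeg u huU
      rw [Finset.card_sdiff_of_subset hSu]
      omega
    obtain ⟨hvu, hvS⟩ := Finset.mem_sdiff.1 hv
    have hSe : S ⊆ (Fface (m + d + 1) d u).erase v := fun y hy =>
      Finset.mem_erase.2 ⟨fun e => hvS (e ▸ hy), hSu hy⟩
    refine Finset.mem_biUnion.2 ⟨(Fface (m + d + 1) d u).erase v, ?_, Finset.mem_powerset.2 hSe⟩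
    refine Finset.mem_filter.2 ⟨Finset.mem_biUnion.2
      ⟨u, huU, Finset.mem_powerset.2 (Finset.erase_subset _ _)⟩, ?_, ?_⟩
    · rw [Finset.card_erase_of_mem hvu, cu]
      rfl
    · refine Finset.card_eq_one.2 ⟨Fface (m + d + 1) d u, ?_⟩
      refine Finset.eq_singleton_iff_unique_mem.2 ⟨Finset.mem_filter.2
        ⟨Finset.mem_image_of_mem _ huU, Finset.erase_subset _ _⟩, ?_⟩
      intro F hF
      obtain ⟨hFU, hsub⟩ := Finset.mem_filter.1 hF
      obtain ⟨w, hw, rfl⟩ := Finset.mem_image.1 hFU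
      by_contra hne
      have hlt := sum_Fface_lt (hvar u huU) (hvar w hw) (hdeg' u huU) (hdeg' w hw) hvu hvf hsub hne
      exact absurd (hmin w (Finset.mem_filter.2 ⟨hw, hSe.trans hsub⟩)) (not_le.2 hlt)
  · intro hSS
    obtain ⟨G, hG, hSG⟩ := Finset.mem_biUnion.1 hSS
    obtain ⟨u, hu, hGu⟩ := Finset.mem_biUnion.1 (Finset.mem_filter.1 hG).1
    exact Finset.mem_biUnion.2 ⟨u, hu, Finset.mem_powerset.2
      ((Finset.mem_powerset.1 hSG).trans (Finset.mem_powerset.1 hGu))⟩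

end SqueezedSpheres
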